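/- arXiv:math/0608766 — 2 statements merged into one kernel-verified Lean document; each statement's English description precedes it below -/
import Mathlib

section
/- For a positive integer n, define f(n) = n / sqfree(n), where sqfree(n) is the radical (squarefree kernel) of n. Then the natural density of the set {n : f(n) = q}, for a fixed positive integer q, equals (6/π²)·(1/q)·∏_{p | q} 1/(p+1). -/
open Filter

/-- The radical (squarefree kernel) of `n`. -/
def sqfreeKernel (n : ℕ) : ℕ := ∏ p ∈ n.primeFactors, p

/-- Number of squarefree `m ≤ Y` not divisible by any element of `P`. -/
def cntS (P : Finset ℕ) (Y : ℕ) : ℕ :=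
  ((Finset.Icc 1 Y).filter (fun m => Squarefree m ∧ ∀ p ∈ P, ¬ p ∣ m)).card

lemma cntS_le (P : Finset ℕ) (Y : ℕ) : cntS P Y ≤ Y := by
  unfold cntS
  refine (Finset.card_filter_le _ _).trans ?_
  simp

lemma cntS_zero (P : Finset ℕ) : cntS P 0 = 0 := by simp [cntS]

lemma tendsto_div_nat (c : ℕ) (hc : 0 < c) :
    Tendsto (fun Y : ℕ => ((Y / c : ℕ) : ℝ) / Y) atTop (nhds (1 / c)) := by
  have h := (tendsto_nat_floor_mul_div_atTop (R := ℝ) (a := 1 / c) (by positivity)).comp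
    tendsto_natCast_atTop_atTop
  refine h.congr (fun Y => ?_)
  simp only [Function.comp]
  rw [one_div_mul_eq_div, Nat.floor_div_natCast, Nat.floor_natCast]

lemma tendsto_scale (g : ℕ → ℕ) (D : ℝ) (c : ℕ) (hc : 0 < c)
    (h : Tendsto (fun Y : ℕ => (g Y : ℝ) / Y) atTop (nhds D)) :
    Tendsto (fun Y : ℕ => (g (Y / c) : ℝ) / Y) atTop (nhds (D * (1 / c))) := by
  have h1 : Tendsto (fun Y : ℕ => Y / c) atTop atTop :=
    Nat.tendsto_div_const_atTop hc.ne'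
  refine ((h.comp h1).mul (tendsto_div_nat c hc)).congr' ?_
  filter_upwards [eventually_ge_atTop c] with Y hY
  have : 0 < Y / c := Nat.div_pos hY hc
  have : ((Y / c : ℕ) : ℝ) ≠ 0 := by exact_mod_cast this.ne'
  simp only [Function.comp]
  field_simp

lemma bound_scale (g : ℕ → ℕ) (hg : ∀ Y, g Y ≤ Y) (c Y : ℕ) :
    (g (Y / c) : ℝ) / Y ≤ 1 / c := by
  rcases Nat.eq_zero_or_pos Y with rfl | hY
  · simp
  have h1 : (g (Y / c) : ℝ) ≤ (Y : ℝ) / c :=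
    (Nat.cast_le.mpr (hg _)).trans Nat.cast_div_le
  have hY' : (0 : ℝ) < Y := by exact_mod_cast hY
  rw [div_le_iff₀ hY']
  calc _ ≤ _ := h1
    _ = _ := by ring

lemma density_step (a b : ℕ → ℕ) (ha : ∀ Y, a Y ≤ Y) (hb : ∀ Y, b Y ≤ Y) (p : ℕ) (hp : 2 ≤ p)
    (hab : ∀ Y, a Y = b Y + b (Y / p)) (D : ℝ)
    (h : Tendsto (fun Y : ℕ => (a Y : ℝ) / Y) atTop (nhds D)) :
    Tendsto (fun Y : ℕ => (b Y : ℝ) / Y) atTop (nhds (D * (p / (p + 1)))) := by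
  have hp0 : (2 : ℝ) ≤ p := by exact_mod_cast hp
  have hz : ∀ Y k, Y ≤ k → Y / p ^ k = 0 := fun Y k hk =>
    Nat.div_eq_of_lt (hk.trans_lt (Nat.lt_pow_self (by omega)))
  have key : ∀ Y N : ℕ, ∑ k ∈ Finset.range N, (-1 : ℝ) ^ k * a (Y / p ^ k)
      = b Y - (-1) ^ N * b (Y / p ^ N) := by
    intro Y N
    induction N with
    | zero => simp
    | succ N ih =>
      rw [Finset.sum_range_succ, ih, hab, Nat.div_div_eq_div_mul, ← pow_succ]
      push_cast
      ring
  have hsum : ∀ Y : ℕ, ∑' k : ℕ, (-1 : ℝ) ^ k * ((a (Y / p ^ k) : ℝ) / Y) = (b Y : ℝ) / Y := by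
    intro Y
    rw [tsum_eq_sum (s := Finset.range Y)]
    · have := key Y Y
      rw [hz Y Y le_rfl, Nat.le_zero.mp (hb 0)] at this
      simp only [← mul_div_assoc]
      rw [← Finset.sum_div, this]
      simp
    · intro k hk
      rw [Finset.mem_range, not_lt] at hk
      rw [hz Y k hk, Nat.le_zero.mp (ha 0)]
      simp
  have hlim : ∑' k : ℕ, (-1 : ℝ) ^ k * (D * (1 / (p ^ k : ℕ))) = D * (p / (p + 1)) := by
    have : ∀ k : ℕ, (-1 : ℝ) ^ k * (D * (1 / (p ^ k : ℕ))) = D * (-1 / p) ^ k := by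
      intro k
      push_cast
      rw [div_pow]; ring
    simp_rw [this]
    rw [tsum_mul_left, tsum_geometric_of_norm_lt_one]
    · congr 1
      field_simp
      ring
    · rw [norm_div, norm_neg, norm_one, Real.norm_of_nonneg (by linarith),
        div_lt_one (by linarith)]
      linarith
  rw [← hlim]
  simp_rw [← hsum]
  refine tendsto_tsum_of_dominated_convergence (bound := fun k : ℕ => (1 / p : ℝ) ^ k) ?_ ?_ ?_
  · apply summable_geometric_of_lt_one (by positivity)
    rw [div_lt_one (by linarith)]
    linarith
  · intro k
    exact (tendsto_scale a D (p ^ k) (by positivity) h).const_mul _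
  · refine Eventually.of_forall (fun Y k => ?_)
    rw [norm_mul, norm_pow, norm_neg, norm_one, one_pow, one_mul,
      Real.norm_of_nonneg (by positivity)]
    refine (bound_scale a ha _ Y).trans_eq ?_
    push_cast
    simp

lemma cntS_rec (P : Finset ℕ) (hP : ∀ r ∈ P, r.Prime) (p : ℕ) (hp : p.Prime) (hpP : p ∉ P)
    (Y : ℕ) : cntS P Y = cntS (insert p P) Y + cntS (insert p P) (Y / p) := by
  unfold cntS
  rw [← Finset.card_filter_add_card_filter_not (fun m => ¬ p ∣ m)]
  congr 1
  · rw [Finset.filter_filter]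
    congr 1
    ext m
    simp only [Finset.mem_filter, Finset.forall_mem_insert]
    tauto
  · symm
    apply Finset.card_bij (fun m _ => p * m)
    · intro m hm
      simp only [Finset.mem_filter, Finset.forall_mem_insert, Finset.mem_Icc] at hm ⊢
      obtain ⟨⟨h1, h2⟩, hs, hpm, hr⟩ := hm
      refine ⟨⟨⟨Nat.mul_pos hp.pos h1, ?_⟩, ?_, ?_⟩, by simp⟩
      · rw [mul_comm]; exact (Nat.le_div_iff_mul_le hp.pos).mp h2
      · rw [Nat.squarefree_mul_iff]
        exact ⟨(Nat.Prime.coprime_iff_not_dvd hp).mpr hpm, hp.prime.squarefree, hs⟩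
      · intro r hrP hd
        rcases (hP r hrP).dvd_mul.mp hd with h | h
        · rw [(Nat.prime_dvd_prime_iff_eq (hP r hrP) hp).mp h] at hrP
          exact hpP hrP
        · exact hr r hrP h
    · intro m _ m' _ h
      exact Nat.eq_of_mul_eq_mul_left hp.pos h
    · intro n hn
      simp only [Finset.mem_filter, Finset.mem_Icc, not_not] at hn
      obtain ⟨⟨⟨h1, h2⟩, hs, hr⟩, m, rfl⟩ := hn
      rw [Nat.squarefree_mul_iff] at hs
      refine ⟨m, ?_, rfl⟩
      simp only [Finset.mem_filter, Finset.forall_mem_insert, Finset.mem_Icc]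
      refine ⟨⟨Nat.pos_of_mul_pos_left h1, ?_⟩, hs.2.2,
        (Nat.Prime.coprime_iff_not_dvd hp).mp hs.1, fun r hrP hd => hr r hrP (hd.mul_left _)⟩
      rw [Nat.le_div_iff_mul_le hp.pos, mul_comm]; exact h2

lemma sq_dvd_sq_mul_iff (a b d : ℕ) (ha : Squarefree a) (hb : 0 < b) :
    d ^ 2 ∣ b ^ 2 * a ↔ d ∣ b := by
  constructor
  · intro h
    have ha0 : a ≠ 0 := ha.ne_zero
    have hd : d ≠ 0 := by
      rintro rfl
      simp [ha0, hb.ne'] at h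
    rw [← Nat.factorization_le_iff_dvd hd hb.ne']
    intro p
    have h1 := (Nat.factorization_le_iff_dvd (by positivity) (by positivity)).mpr h p
    rw [Nat.factorization_mul (by positivity) ha0] at h1
    simp only [Nat.factorization_pow, Finsupp.add_apply, Finsupp.smul_apply, smul_eq_mul] at h1
    have h2 := ha.natFactorization_le_one p
    omega
  · intro h
    exact (pow_dvd_pow_of_dvd h 2).mul_right _

lemma sum_moebius_sq (n N : ℕ) (hn : 0 < n) (hN : n ≤ N) :
    ∑ d ∈ Finset.Icc 1 N, (if d ^ 2 ∣ n then ArithmeticFunction.moebius d else 0)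
      = if Squarefree n then 1 else 0 := by
  obtain ⟨a, b, ha, hb, rfl, hs⟩ := Nat.sq_mul_squarefree_of_pos hn
  simp_rw [sq_dvd_sq_mul_iff a b _ hs hb]
  rw [← Finset.sum_filter]
  have : (Finset.Icc 1 N).filter (fun d => d ∣ b) = b.divisors := by
    ext d
    simp only [Finset.mem_filter, Finset.mem_Icc, Nat.mem_divisors]
    constructor
    · rintro ⟨_, h⟩; exact ⟨h, hb.ne'⟩
    · rintro ⟨h, _⟩
      refine ⟨⟨Nat.pos_of_dvd_of_pos h hb, (Nat.le_of_dvd hb h).trans ?_⟩, h⟩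
      nlinarith
  rw [this, ← ArithmeticFunction.coe_zeta_mul_apply, ArithmeticFunction.coe_zeta_mul_moebius,
    ArithmeticFunction.one_apply]
  congr 1
  rw [eq_iff_iff]
  constructor
  · rintro rfl; simpa using hs
  · intro h
    have := h b ⟨a, by ring⟩
    exact Nat.isUnit_iff.mp this

lemma cntS_empty (Y : ℕ) :
    (cntS ∅ Y : ℤ) = ∑ d ∈ Finset.Icc 1 Y, ArithmeticFunction.moebius d * ((Y / d ^ 2 : ℕ) : ℤ) := by
  unfold cntS
  simp only [Finset.notMem_empty, false_imp_iff, implies_true, and_true]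
  rw [Finset.card_filter]
  push_cast
  calc _ = ∑ n ∈ Finset.Icc 1 Y, ∑ d ∈ Finset.Icc 1 Y,
        (if d ^ 2 ∣ n then ArithmeticFunction.moebius d else 0) := by
        refine Finset.sum_congr rfl fun n hn => ?_
        rw [Finset.mem_Icc] at hn
        rw [sum_moebius_sq n Y hn.1 hn.2]
    _ = _ := by
        rw [Finset.sum_comm]
        refine Finset.sum_congr rfl fun d hd => ?_
        rw [← Finset.sum_filter, Finset.sum_const, nsmul_eq_mul, mul_comm]
        congr 2
        exact Nat.Ioc_filter_dvd_card_eq_div Y (d ^ 2)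

lemma tsum_moebius : ∑' d : ℕ, (ArithmeticFunction.moebius d : ℝ) * (1 / (d ^ 2 : ℕ))
    = 6 / Real.pi ^ 2 := by
  have h := LSeries_one_mul_Lseries_moebius (s := 2) (by norm_num)
  rw [LSeries_one_eq_riemannZeta (by norm_num), riemannZeta_two] at h
  have h2 : LSeries (fun n => ((ArithmeticFunction.moebius n : ℤ) : ℂ)) 2
      = ((∑' d : ℕ, (ArithmeticFunction.moebius d : ℝ) * (1 / (d ^ 2 : ℕ)) : ℝ) : ℂ) := by
    rw [LSeries, Complex.ofReal_tsum]
    refine tsum_congr fun d => ?_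
    rcases Nat.eq_zero_or_pos d with rfl | hd
    · simp
    · rw [LSeries.term_of_ne_zero hd.ne']
      push_cast
      rw [show (2 : ℂ) = ((2 : ℕ) : ℂ) by norm_num, Complex.cpow_natCast]
      ring
  rw [h2] at h
  have h3 : (Real.pi ^ 2 / 6) *
      (∑' d : ℕ, (ArithmeticFunction.moebius d : ℝ) * (1 / (d ^ 2 : ℕ))) = 1 := by
    exact_mod_cast h
  have := Real.pi_pos
  field_simp at h3 ⊢
  linarith

lemma density_empty : Tendsto (fun Y : ℕ => (cntS ∅ Y : ℝ) / Y) atTop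
    (nhds (6 / Real.pi ^ 2)) := by
  have hsum : ∀ Y : ℕ, (cntS ∅ Y : ℝ) / Y
      = ∑' d : ℕ, (ArithmeticFunction.moebius d : ℝ) * (((Y / d ^ 2 : ℕ) : ℝ) / Y) := by
    intro Y
    rw [tsum_eq_sum (s := Finset.Icc 1 Y)]
    · have : (cntS ∅ Y : ℝ) = ((cntS ∅ Y : ℤ) : ℝ) := by simp
      rw [this, cntS_empty]
      rw [Int.cast_sum, Finset.sum_div]
      refine Finset.sum_congr rfl fun d _ => ?_
      rw [Int.cast_mul, Int.cast_natCast]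
      ring
    · intro d hd
      rcases Nat.eq_zero_or_pos d with rfl | hd0
      · simp
      · have : Y < d := by
          simp only [Finset.mem_Icc] at hd; omega
        rw [Nat.div_eq_of_lt (by nlinarith)]
        simp
  simp_rw [hsum]
  rw [← tsum_moebius]
  refine tendsto_tsum_of_dominated_convergence (bound := fun d : ℕ => 1 / (d : ℝ) ^ 2) ?_ ?_ ?_
  · exact Real.summable_one_div_nat_pow.mpr (by norm_num)
  · intro d
    rcases Nat.eq_zero_or_pos d with rfl | hd
    · simp
    · exact (tendsto_div_nat (d ^ 2) (by positivity)).const_mul _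
  · refine Eventually.of_forall (fun Y d => ?_)
    have h1 : ‖(ArithmeticFunction.moebius d : ℝ)‖ ≤ 1 := by
      rw [Real.norm_eq_abs]
      exact_mod_cast ArithmeticFunction.abs_moebius_le_one (n := d)
    have h2 := bound_scale (fun n => n) (fun _ => le_rfl) (d ^ 2) Y
    rw [norm_mul, Real.norm_of_nonneg (r := ((Y / d ^ 2 : ℕ) : ℝ) / Y) (by positivity)]
    calc _ ≤ 1 * (((Y / d ^ 2 : ℕ) : ℝ) / Y) := by gcongr
      _ ≤ _ := by simpa using h2

lemma density_P (P : Finset ℕ) (hP : ∀ r ∈ P, r.Prime) :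
    Tendsto (fun Y : ℕ => (cntS P Y : ℝ) / Y) atTop
    (nhds (6 / Real.pi ^ 2 * ∏ p ∈ P, ((p : ℝ) / (p + 1)))) := by
  induction P using Finset.induction_on with
  | empty => simpa using density_empty
  | insert p P hpP ih =>
    rw [Finset.forall_mem_insert] at hP
    rw [Finset.prod_insert hpP, mul_comm ((p : ℝ) / (p + 1)), ← mul_assoc]
    exact density_step _ _ (cntS_le _) (cntS_le _) p hP.1.two_le
      (cntS_rec P hP.2 p hP.1 hpP) _ (ih hP.2)

lemma sqfreeKernel_pos (n : ℕ) : 0 < sqfreeKernel n :=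
  Finset.prod_pos fun _ hp => (Nat.prime_of_mem_primeFactors hp).pos

lemma sqfreeKernel_primeFactors (n : ℕ) : (sqfreeKernel n).primeFactors = n.primeFactors :=
  Nat.primeFactors_prod fun _ hp => Nat.prime_of_mem_primeFactors hp

lemma sqfreeKernel_squarefree (n : ℕ) : Squarefree (sqfreeKernel n) := by
  unfold sqfreeKernel
  refine Finset.squarefree_prod_of_pairwise_isCoprime ?_ ?_
  · intro p hp r hr hne
    have := (Nat.coprime_primes (Nat.prime_of_mem_primeFactors hp)
      (Nat.prime_of_mem_primeFactors hr)).mpr hne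
    exact Nat.coprime_iff_isRelPrime.mp this
  · intro p hp
    exact (Nat.prime_of_mem_primeFactors hp).prime.squarefree

lemma count_eq (q : ℕ) (hq : 0 < q) (X : ℕ) :
    ((Finset.Icc 1 X).filter (fun n => n / sqfreeKernel n = q)).card
      = cntS q.primeFactors (X / (q * sqfreeKernel q)) := by
  have hc : 0 < q * sqfreeKernel q := Nat.mul_pos hq (sqfreeKernel_pos q)
  symm
  unfold cntS
  apply Finset.card_bij (fun m _ => q * sqfreeKernel q * m)
  · intro m hm
    simp only [Finset.mem_filter, Finset.mem_Icc] at hm ⊢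
    obtain ⟨⟨h1, h2⟩, hs, hr⟩ := hm
    have hcop : q.Coprime m := by
      refine Nat.Coprime.symm (Nat.coprime_of_dvd fun p hp hpm hpq => ?_)
      exact hr p (Nat.mem_primeFactors.mpr ⟨hp, hpq, hq.ne'⟩) hpm
    have hk : sqfreeKernel (q * sqfreeKernel q * m) = sqfreeKernel q * m := by
      change ∏ p ∈ (q * sqfreeKernel q * m).primeFactors, p = _
      rw [Nat.primeFactors_mul hc.ne' (by omega),
        Nat.primeFactors_mul hq.ne' (sqfreeKernel_pos q).ne', sqfreeKernel_primeFactors,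
        Finset.union_self, Finset.prod_union hcop.disjoint_primeFactors,
        Nat.prod_primeFactors_of_squarefree hs]
      rfl
    refine ⟨⟨Nat.mul_pos hc h1, ?_⟩, ?_⟩
    · rw [mul_comm]; exact (Nat.le_div_iff_mul_le hc).mp h2
    · rw [hk, mul_assoc]
      exact Nat.mul_div_cancel _ (Nat.mul_pos (sqfreeKernel_pos q) h1)
  · intro m _ m' _ h
    exact Nat.eq_of_mul_eq_mul_left hc h
  · intro n hn
    simp only [Finset.mem_filter, Finset.mem_Icc] at hn
    obtain ⟨⟨h1, h2⟩, h3⟩ := hn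
    have hdvd : sqfreeKernel n ∣ n := Nat.prod_primeFactors_dvd n
    have hn : n = q * sqfreeKernel n := by
      rw [← h3]; exact (Nat.div_mul_cancel hdvd).symm
    have hqn : q ∣ n := ⟨_, hn⟩
    obtain ⟨m, hm⟩ : sqfreeKernel q ∣ sqfreeKernel n :=
      Finset.prod_dvd_prod_of_subset _ _ _ (Nat.primeFactors_mono hqn (by omega))
    have hs := sqfreeKernel_squarefree n
    rw [hm, Nat.squarefree_mul_iff] at hs
    have hn' : n = q * sqfreeKernel q * m := by rw [mul_assoc, ← hm]; exact hn
    refine ⟨m, ?_, hn'.symm⟩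
    simp only [Finset.mem_filter, Finset.mem_Icc]
    refine ⟨⟨Nat.pos_of_ne_zero hs.2.2.ne_zero, ?_⟩, hs.2.2, ?_⟩
    · rw [Nat.le_div_iff_mul_le hc, mul_comm, ← hn']; exact h2
    · intro p hp hpm
      have hpp := Nat.prime_of_mem_primeFactors hp
      have : p ∣ sqfreeKernel q := Finset.dvd_prod_of_mem _ hp
      exact Nat.not_coprime_of_dvd_of_dvd hpp.one_lt this hpm hs.1

theorem stmt7 (q : ℕ) (hq : 0 < q) :
    Tendsto
      (fun X : ℕ =>
        (((Finset.Icc 1 X).filter (fun n => n / sqfreeKernel n = q)).card : ℝ) / X)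
      atTop
      (nhds ((6 / Real.pi ^ 2) * (1 / q) * ∏ p ∈ q.primeFactors, (1 : ℝ) / (p + 1))) := by
  simp_rw [count_eq q hq]
  have h := tendsto_scale (cntS q.primeFactors) _ (q * sqfreeKernel q)
    (Nat.mul_pos hq (sqfreeKernel_pos q))
    (density_P q.primeFactors fun r hr => Nat.prime_of_mem_primeFactors hr)
  convert h using 2
  have h1 : ∏ p ∈ q.primeFactors, ((p : ℝ) / (p + 1))
      = (sqfreeKernel q : ℝ) * ∏ p ∈ q.primeFactors, (1 : ℝ) / (p + 1) := by
    unfold sqfreeKernel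
    push_cast
    rw [← Finset.prod_mul_distrib]
    refine Finset.prod_congr rfl fun p _ => ?_
    ring
  have h2 : (sqfreeKernel q : ℝ) ≠ 0 := by exact_mod_cast (sqfreeKernel_pos q).ne'
  have h3 : (q : ℝ) ≠ 0 := by exact_mod_cast hq.ne'
  rw [h1]
  push_cast
  generalize ∏ p ∈ q.primeFactors, (1 : ℝ) / (p + 1) = Z
  field_simp
end

section
/- The function g(t) = 2^{1/3}·π·(t−t²)^{1/6} / agm(1, √t) on (0,1) extends continuously by 0 at t = 0 and t = 1, and attains a maximum value less than 4.414499094 on [0,1]; moreover g(t) → 0 as t → 0⁺ and as t → 1⁻. -/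
open Filter Set

/-- The AGM iteration: `agmSeq a b n` is the pair `(aₙ, bₙ)`. -/
noncomputable def agmSeq (a b : ℝ) : ℕ → ℝ × ℝ
  | 0 => (a, b)
  | n + 1 => (((agmSeq a b n).1 + (agmSeq a b n).2) / 2,
      Real.sqrt ((agmSeq a b n).1 * (agmSeq a b n).2))

/-- The arithmetic–geometric mean of `a` and `b`. -/
noncomputable def agm (a b : ℝ) : ℝ := limUnder atTop (fun n => (agmSeq a b n).1)

noncomputable def g (t : ℝ) : ℝ :=
  2 ^ ((1 : ℝ) / 3) * Real.pi * (t - t ^ 2) ^ ((1 : ℝ) / 6) / agm 1 (Real.sqrt t)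


lemma agmSeq_eq (x y : NNReal) (n : ℕ) :
    agmSeq x y (n + 1) =
      (((NNReal.agmSequences x y n).2 : ℝ), ((NNReal.agmSequences x y n).1 : ℝ)) := by
  induction n with
  | zero => simp [agmSeq]
  | succ n ih =>
    rw [agmSeq, ih, NNReal.agmSequences_succ']
    simp [mul_comm, add_comm]

lemma agm_eq_nn (x y : NNReal) : agm x y = (NNReal.agm x y : ℝ) := by
  apply Tendsto.limUnder_eq
  rw [← tendsto_add_atTop_iff_nat 1]
  simp only [agmSeq_eq]
  exact (NNReal.tendsto_coe.2 NNReal.tendsto_agmSequences_snd_agm)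

lemma le_agm' {a b : ℝ} (ha : 0 ≤ a) (hb : 0 ≤ b) (n : ℕ) :
    (agmSeq a b (n + 1)).2 ≤ agm a b := by
  lift a to NNReal using ha
  lift b to NNReal using hb
  rw [agmSeq_eq, agm_eq_nn]
  exact NNReal.coe_le_coe.2 (NNReal.agmSequences_fst_le_agm n)

lemma dist_agm' {a b : ℝ} (ha : 0 ≤ a) (hb : 0 ≤ b) (n : ℕ) :
    dist (agm a b) (agmSeq a b (n + 1)).1 ≤ dist a b / 2 ^ (n + 1) := by
  lift a to NNReal using ha
  lift b to NNReal using hb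
  have h := NNReal.dist_agmSequences_fst_snd (x := a) (y := b) n
  rw [agmSeq_eq, agm_eq_nn]
  rw [NNReal.dist_eq, NNReal.dist_eq] at h
  rw [Real.dist_eq, Real.dist_eq]
  refine le_trans ?_ h
  have h1 := NNReal.coe_le_coe.2 (NNReal.agmSequences_fst_le_agm (x := a) (y := b) n)
  have h2 := NNReal.coe_le_coe.2 (NNReal.agm_le_agmSequences_snd (x := a) (y := b) n)
  rw [abs_of_nonpos (by linarith), abs_of_nonpos (by linarith)]
  linarith

lemma agmSeq_cont (n : ℕ) : Continuous (fun t : ℝ => agmSeq 1 (Real.sqrt t) n) := by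
  induction n with
  | zero => simp only [agmSeq]; fun_prop
  | succ n ih => simp only [agmSeq]; fun_prop

lemma agm_cont : ContinuousOn (fun t : ℝ => agm 1 (Real.sqrt t)) (Icc 0 1) := by
  have hu : TendstoUniformlyOn (fun (n : ℕ) (t : ℝ) => (agmSeq 1 (Real.sqrt t) (n + 1)).1)
      (fun t : ℝ => agm 1 (Real.sqrt t)) atTop (Icc 0 1) := by
    rw [Metric.tendstoUniformlyOn_iff]
    intro ε hε
    obtain ⟨N, hN⟩ := exists_pow_lt_of_lt_one hε (show (1 / 2 : ℝ) < 1 by norm_num)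
    filter_upwards [eventually_ge_atTop N] with n hn t ht
    refine (dist_agm' zero_le_one (Real.sqrt_nonneg t) n).trans_lt (lt_of_le_of_lt ?_ hN)
    have h1 : dist (1 : ℝ) (Real.sqrt t) ≤ 1 := by
      rw [Real.dist_eq, abs_le]
      have := Real.sqrt_nonneg t
      have := Real.sqrt_le_one.2 ht.2
      constructor <;> linarith
    calc dist (1 : ℝ) (Real.sqrt t) / 2 ^ (n + 1) ≤ 1 / 2 ^ (n + 1) := by gcongr
      _ = (1 / 2 : ℝ) ^ (n + 1) := by rw [div_pow, one_pow]
      _ ≤ (1 / 2 : ℝ) ^ N := pow_le_pow_of_le_one (by norm_num) (by norm_num) (by omega)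
  exact hu.continuousOn (Frequently.of_forall fun n =>
    ((agmSeq_cont (n + 1)).fst).continuousOn)

lemma agm_lower {t : ℝ} (ht : 0 < t) (ht1 : t < 1) :
    ∃ p w : ℝ, 0 < w ∧ w < p ∧ w ^ 8 = t ∧ 2 * p ^ 2 = 1 + w ^ 4 ∧
      ((p + w) ^ 2 / 4) ^ 6 * ((p ^ 2 + w ^ 2) / 2) ^ 3 * (p * w) ^ 3
        ≤ (agm 1 (Real.sqrt t)) ^ 12 := by
  have hr : 0 < √t := Real.sqrt_pos.2 ht
  have hr1 : √t < 1 := by rw [Real.sqrt_lt' one_pos]; simpa using ht1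
  set r := √t with hrdef
  have hrt : r ^ 2 = t := Real.sq_sqrt ht.le
  have hsr : 0 < √r := Real.sqrt_pos.2 hr
  have hsr2 : √r ^ 2 = r := Real.sq_sqrt hr.le
  have hsr1 : √r < 1 := by rw [Real.sqrt_lt' one_pos]; simpa using hr1
  set w := √(√r) with hw
  set p := √((1 + r) / 2) with hp
  have hw0 : 0 < w := Real.sqrt_pos.2 hsr
  have hw2 : w ^ 2 = √r := Real.sq_sqrt hsr.le
  have hp2 : p ^ 2 = (1 + r) / 2 := Real.sq_sqrt (by positivity)
  have hp0 : 0 < p := Real.sqrt_pos.2 (by positivity)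
  have hw4 : w ^ 4 = r := by rw [← hsr2, ← hw2]; ring
  refine ⟨p, w, hw0, ?_, ?_, ?_, ?_⟩
  · apply Real.sqrt_lt_sqrt hsr.le
    nlinarith
  · rw [← hrt, ← hw4]; ring
  · rw [hw4, hp2]; ring
  have e1 : agmSeq 1 r 1 = (p ^ 2, w ^ 2) := by
    simp only [agmSeq, hp2, hw2, one_mul]
  have e2 : agmSeq 1 r 2 = ((p ^ 2 + w ^ 2) / 2, p * w) := by
    rw [agmSeq, e1]
    simp only [Prod.mk.injEq, true_and]
    rw [show p ^ 2 * w ^ 2 = (p * w) ^ 2 by ring]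
    exact Real.sqrt_sq (by positivity)
  have e3 : agmSeq 1 r 3 = ((p + w) ^ 2 / 4, √((p ^ 2 + w ^ 2) / 2 * (p * w))) := by
    rw [agmSeq, e2]
    simp only [Prod.mk.injEq, and_true]
    ring
  have e4 : (agmSeq 1 r 4).2 = √((p + w) ^ 2 / 4 * √((p ^ 2 + w ^ 2) / 2 * (p * w))) := by
    rw [agmSeq, e3]
  have h := le_agm' zero_le_one hr.le 3
  rw [e4] at h
  refine le_trans (le_of_eq ?_) (pow_le_pow_left₀ (Real.sqrt_nonneg _) h 12)
  set X := (p ^ 2 + w ^ 2) / 2 * (p * w) with hX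
  have hX0 : 0 ≤ X := by positivity
  have k1 : √((p + w) ^ 2 / 4 * √X) ^ 2 = (p + w) ^ 2 / 4 * √X := Real.sq_sqrt (by positivity)
  have k2 : √X ^ 2 = X := Real.sq_sqrt hX0
  symm
  calc √((p + w) ^ 2 / 4 * √X) ^ 12 = (√((p + w) ^ 2 / 4 * √X) ^ 2) ^ 6 := by ring
    _ = ((p + w) ^ 2 / 4) ^ 6 * (√X ^ 2) ^ 3 := by rw [k1]; ring
    _ = _ := by rw [k2, hX]; ring

lemma poly_bound {s : ℝ} (h0 : 0 ≤ s) (h1 : s ≤ 1) :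
    2048 * Real.pi ^ 12 * (s * (1 - s) ^ 13 * (1 + s)) < 4.414499094 ^ 12 * (1 + s ^ 2) ^ 2 := by
  obtain ⟨c, hc⟩ : ∃ c : ℝ, c = 0.074553332783 := ⟨_, rfl⟩
  have hc0 : 0 < c := by rw [hc]; norm_num
  have hc1 : 0 < 1 - c := by rw [hc]; norm_num
  have a1 : s ≤ c * Real.exp (s / c - 1) := by
    have := Real.add_one_le_exp (s / c - 1)
    calc s = c * (s / c - 1 + 1) := by field_simp; ring
      _ ≤ _ := by gcongr
  have a2 : 1 - s ≤ (1 - c) * Real.exp ((1 - s) / (1 - c) - 1) := by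
    have := Real.add_one_le_exp ((1 - s) / (1 - c) - 1)
    calc 1 - s = (1 - c) * ((1 - s) / (1 - c) - 1 + 1) := by field_simp; ring
      _ ≤ _ := by gcongr
  have a3 : 1 + s ≤ (1 + c) * Real.exp ((1 + s) / (1 + c) - 1) := by
    have := Real.add_one_le_exp ((1 + s) / (1 + c) - 1)
    calc 1 + s = (1 + c) * ((1 + s) / (1 + c) - 1 + 1) := by field_simp; ring
      _ ≤ _ := by gcongr
  have a4 : 1 + c ^ 2 ≤ (1 + s ^ 2) * Real.exp (-(2 * c * (s - c) / (1 + c ^ 2))) := by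
    have := Real.add_one_le_exp (-(2 * c * (s - c) / (1 + c ^ 2)))
    calc 1 + c ^ 2 ≤ (1 + s ^ 2) * (-(2 * c * (s - c) / (1 + c ^ 2)) + 1) := by
          have key : (1 + s ^ 2) * (-(2 * c * (s - c) / (1 + c ^ 2)) + 1) - (1 + c ^ 2)
              = (s - c) ^ 2 * (1 - c ^ 2 - 2 * c * s) / (1 + c ^ 2) := by
            field_simp; ring
          have : 0 ≤ 1 - c ^ 2 - 2 * c * s := by rw [hc]; nlinarith
          have : 0 ≤ (s - c) ^ 2 * (1 - c ^ 2 - 2 * c * s) / (1 + c ^ 2) := by positivity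
          linarith
      _ ≤ _ := by gcongr
  have hs1 : 0 ≤ 1 - s := by linarith
  have prod : s * (1 - s) ^ 13 * (1 + s) * (1 + c ^ 2) ^ 2 ≤
      (c * (1 - c) ^ 13 * (1 + c)) * (1 + s ^ 2) ^ 2 * (1 / (1 - 0.00000000002)) := by
    calc s * (1 - s) ^ 13 * (1 + s) * (1 + c ^ 2) ^ 2 ≤
        (c * Real.exp (s / c - 1)) * ((1 - c) * Real.exp ((1 - s) / (1 - c) - 1)) ^ 13 *
        ((1 + c) * Real.exp ((1 + s) / (1 + c) - 1)) *
        ((1 + s ^ 2) * Real.exp (-(2 * c * (s - c) / (1 + c ^ 2)))) ^ 2 := by gcongr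
      _ = (c * (1 - c) ^ 13 * (1 + c)) * (1 + s ^ 2) ^ 2 *
          Real.exp ((s / c - 1) + (13 : ℕ) * ((1 - s) / (1 - c) - 1) + ((1 + s) / (1 + c) - 1)
            + (2 : ℕ) * (-(2 * c * (s - c) / (1 + c ^ 2)))) := by
          rw [Real.exp_add, Real.exp_add, Real.exp_add, Real.exp_nat_mul, Real.exp_nat_mul]
          ring
      _ ≤ _ := by
          gcongr
          have hE : (s / c - 1) + (13 : ℕ) * ((1 - s) / (1 - c) - 1) + ((1 + s) / (1 + c) - 1)
            + (2 : ℕ) * (-(2 * c * (s - c) / (1 + c ^ 2))) ≤ 0.00000000002 := by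
            have : (s / c - 1) + (13 : ℕ) * ((1 - s) / (1 - c) - 1) + ((1 + s) / (1 + c) - 1)
              + (2 : ℕ) * (-(2 * c * (s - c) / (1 + c ^ 2)))
              = (1 / c - 13 / (1 - c) + 1 / (1 + c) - 4 * c / (1 + c ^ 2)) * (s - c) := by
              push_cast
              field_simp
              ring
            rw [this]
            have e1 : (1 / c - 13 / (1 - c) + 1 / (1 + c) - 4 * c / (1 + c ^ 2)) ≤ 0 := by
              rw [hc]; norm_num
            have e2 : -0.0000000002 ≤ (1 / c - 13 / (1 - c) + 1 / (1 + c) - 4 * c / (1 + c ^ 2)) := by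
              rw [hc]; norm_num
            have e3 : c ≤ 0.1 := by rw [hc]; norm_num
            nlinarith
          refine (Real.exp_le_exp.2 hE).trans ?_
          have := Real.add_one_le_exp (-0.00000000002 : ℝ)
          rw [le_div_iff₀ (by norm_num)]
          calc Real.exp 0.00000000002 * (1 - 0.00000000002) ≤ Real.exp 0.00000000002 * Real.exp (-0.00000000002) := by
                gcongr; linarith
            _ = 1 := by rw [← Real.exp_add]; norm_num
  have hpi : Real.pi ^ 12 ≤ 3.14159265358979323847 ^ 12 := by
    gcongr; exact Real.pi_lt_d20.le
  have num : 2048 * (3.14159265358979323847 : ℝ) ^ 12 *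
      ((c * (1 - c) ^ 13 * (1 + c)) * (1 / (1 - 0.00000000002))) < 4.414499094 ^ 12 * (1 + c ^ 2) ^ 2 := by
    rw [hc]; norm_num
  have hq : 0 < (1 + s ^ 2) ^ 2 := by positivity
  have hcq : 0 < (1 + c ^ 2) ^ 2 := by positivity
  refine lt_of_mul_lt_mul_right ?_ hcq.le
  calc 2048 * Real.pi ^ 12 * (s * (1 - s) ^ 13 * (1 + s)) * (1 + c ^ 2) ^ 2
      = 2048 * Real.pi ^ 12 * (s * (1 - s) ^ 13 * (1 + s) * (1 + c ^ 2) ^ 2) := by ring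
    _ ≤ 2048 * (3.14159265358979323847 : ℝ) ^ 12 *
        ((c * (1 - c) ^ 13 * (1 + c)) * (1 + s ^ 2) ^ 2 * (1 / (1 - 0.00000000002))) := by
        gcongr
    _ = (2048 * (3.14159265358979323847 : ℝ) ^ 12 *
      ((c * (1 - c) ^ 13 * (1 + c)) * (1 / (1 - 0.00000000002)))) * (1 + s ^ 2) ^ 2 := by ring
    _ < (4.414499094 ^ 12 * (1 + c ^ 2) ^ 2) * (1 + s ^ 2) ^ 2 := by gcongr
    _ = _ := by ring

lemma agm_pos' {t : ℝ} (ht : 0 < t) : 0 < agm 1 (Real.sqrt t) := by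
  refine lt_of_lt_of_le ?_ (le_agm' zero_le_one (Real.sqrt_nonneg t) 0)
  simp only [agmSeq]
  have := Real.sqrt_pos.2 ht
  positivity

lemma hom_bound {p w : ℝ} (hw : 0 < w) (hwp : w < p) :
    256 * Real.pi ^ 12 * (w ^ 16 * p ^ 4 * (p ^ 4 - w ^ 4)) <
    4.414499094 ^ 12 * (((p + w) ^ 2 / 4) ^ 6 * ((p ^ 2 + w ^ 2) / 2) ^ 3 * (p * w) ^ 3) := by
  have hp : 0 < p := hw.trans hwp
  obtain ⟨s, hs⟩ : ∃ s, s = (p - w) / (p + w) := ⟨_, rfl⟩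
  obtain ⟨σ, hσ⟩ : ∃ σ, σ = (p + w) / 2 := ⟨_, rfl⟩
  have hσ0 : 0 < σ := by rw [hσ]; positivity
  have hs0 : 0 < s := by rw [hs]; apply div_pos <;> linarith
  have hs1 : s < 1 := by rw [hs, div_lt_one (by linarith)]; linarith
  have hpe : p = σ * (1 + s) := by rw [hs, hσ]; field_simp; ring
  have hwe : w = σ * (1 - s) := by rw [hs, hσ]; field_simp; ring
  have h := poly_bound hs0.le hs1.le
  have hs2 : 0 < 1 - s := by linarith
  have hpos : 0 < σ ^ 24 * (1 + s) ^ 3 * (1 - s) ^ 3 * (1 + s ^ 2) := by positivity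
  have h2 := mul_lt_mul_of_pos_right h hpos
  rw [hpe, hwe]
  calc _ = 2048 * Real.pi ^ 12 * (s * (1 - s) ^ 13 * (1 + s)) *
        (σ ^ 24 * (1 + s) ^ 3 * (1 - s) ^ 3 * (1 + s ^ 2)) := by ring
    _ < _ := h2
    _ = _ := by ring

lemma g_lt {t : ℝ} (ht : 0 < t) (ht1 : t < 1) : g t < 4.414499094 := by
  obtain ⟨p, w, hw, hwp, hwt, hpw, hle⟩ := agm_lower ht ht1
  have hM := agm_pos' ht
  have hb := hom_bound hw hwp
  have hu : 0 ≤ t - t ^ 2 := by nlinarith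
  rw [g, div_lt_iff₀ hM]
  refine lt_of_pow_lt_pow_left₀ 12 (by positivity) ?_
  rw [mul_pow, mul_pow, mul_pow]
  have c1 : ((2 : ℝ) ^ ((1 : ℝ) / 3)) ^ 12 = 16 := by
    rw [← Real.rpow_natCast, ← Real.rpow_mul (by norm_num)]
    norm_num
  have c2 : ((t - t ^ 2) ^ ((1 : ℝ) / 6)) ^ 12 = (t - t ^ 2) ^ 2 := by
    rw [← Real.rpow_natCast, ← Real.rpow_mul hu, ← Real.rpow_natCast]
    norm_num
  rw [c1, c2]
  have e : (t - t ^ 2) ^ 2 = 16 * (w ^ 16 * p ^ 4 * (p ^ 4 - w ^ 4)) := by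
    have hp2 : p ^ 2 = (1 + w ^ 4) / 2 := by linarith
    rw [show p ^ 4 = (p ^ 2) ^ 2 by ring, hp2, ← hwt]
    ring
  rw [e]
  calc _ = 256 * Real.pi ^ 12 * (w ^ 16 * p ^ 4 * (p ^ 4 - w ^ 4)) := by ring
    _ < _ := hb
    _ ≤ _ := by gcongr

lemma g_zero : g 0 = 0 := by simp [g]
lemma g_one : g 1 = 0 := by simp [g]

lemma g_contAt {t : ℝ} (ht : 0 < t) (ht1 : t ≤ 1) : ContinuousWithinAt g (Icc 0 1) t := by
  unfold g
  refine ContinuousWithinAt.div ?_ (agm_cont t ⟨ht.le, ht1⟩) (agm_pos' ht).ne'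
  refine Continuous.continuousWithinAt ?_
  refine continuous_const.mul (Continuous.rpow_const (by fun_prop) fun x => Or.inr (by norm_num))

lemma agm_low0 {t : ℝ} (ht : 0 < t) : t ^ ((1 : ℝ) / 8) / 2 ≤ agm 1 (Real.sqrt t) := by
  refine le_trans ?_ (le_agm' zero_le_one (Real.sqrt_nonneg t) 1)
  simp only [agmSeq, one_mul]
  apply Real.le_sqrt_of_sq_le
  have h1 : √(√t) = t ^ ((1 : ℝ) / 4) := by
    rw [Real.sqrt_eq_rpow, Real.sqrt_eq_rpow, ← Real.rpow_mul ht.le]; norm_num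
  have h2 : (t ^ ((1 : ℝ) / 8)) ^ 2 = t ^ ((1 : ℝ) / 4) := by
    rw [← Real.rpow_natCast, ← Real.rpow_mul ht.le]; norm_num
  rw [div_pow, h2, h1]
  have : 0 < t ^ ((1 : ℝ) / 4) := by positivity
  have := mul_nonneg (Real.sqrt_nonneg t) this.le
  nlinarith

lemma g_tendsto0 : Tendsto g (nhdsWithin 0 (Ioi 0)) (nhds 0) := by
  have hlim : Tendsto (fun t : ℝ => 2 ^ ((1 : ℝ) / 3) * Real.pi * 2 * t ^ ((1 : ℝ) / 24))
      (nhdsWithin 0 (Ioi 0)) (nhds 0) := by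
    have hc : Continuous (fun t : ℝ => 2 ^ ((1 : ℝ) / 3) * Real.pi * 2 * t ^ ((1 : ℝ) / 24)) :=
      continuous_const.mul (Continuous.rpow_const (by fun_prop) fun x => Or.inr (by norm_num))
    have := hc.tendsto 0
    rw [Real.zero_rpow (by norm_num), mul_zero] at this
    exact this.mono_left nhdsWithin_le_nhds
  have hev : ∀ᶠ t : ℝ in nhdsWithin 0 (Ioi 0), t ∈ Ioo (0 : ℝ) 1 :=
    Ioo_mem_nhdsGT one_pos
  refine squeeze_zero' ?_ ?_ hlim
  · filter_upwards [hev] with t ht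
    have h1 := agm_pos' ht.1
    have hu : 0 ≤ t - t ^ 2 := by nlinarith [ht.1, ht.2]
    unfold g
    positivity
  · filter_upwards [hev] with t ht
    have h0 := ht.1
    have h1 := agm_pos' ht.1
    have hu : 0 ≤ t - t ^ 2 := by nlinarith [ht.1, ht.2]
    unfold g
    rw [div_le_iff₀ h1]
    have hl := agm_low0 ht.1
    calc 2 ^ ((1 : ℝ) / 3) * Real.pi * (t - t ^ 2) ^ ((1 : ℝ) / 6)
        ≤ 2 ^ ((1 : ℝ) / 3) * Real.pi * t ^ ((1 : ℝ) / 6) := by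
          have : t - t ^ 2 ≤ t := by nlinarith
          gcongr
      _ = 2 ^ ((1 : ℝ) / 3) * Real.pi * 2 * t ^ ((1 : ℝ) / 24) * (t ^ ((1 : ℝ) / 8) / 2) := by
          rw [show (1 : ℝ) / 6 = 1 / 24 + 1 / 8 by norm_num, Real.rpow_add h0]
          ring
      _ ≤ _ := by gcongr

theorem stmt16 :
    Tendsto g (nhdsWithin 0 (Ioi 0)) (nhds 0) ∧
    Tendsto g (nhdsWithin 1 (Iio 1)) (nhds 0) ∧
    ∃ t₀ ∈ Icc (0 : ℝ) 1, (∀ t ∈ Icc (0 : ℝ) 1, g t ≤ g t₀) ∧ g t₀ < 4.414499094 := by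
  refine ⟨g_tendsto0, ?_, ?_⟩
  · have h := (g_contAt one_pos le_rfl).tendsto
    rw [g_one] at h
    refine h.mono_left ?_
    rw [nhdsWithin_le_iff]
    exact mem_of_superset (Ioo_mem_nhdsLT (zero_lt_one' ℝ)) Ioo_subset_Icc_self
  · have hc : ContinuousOn g (Icc 0 1) := by
      intro t ht
      rcases ht.1.eq_or_lt with h | h
      · subst h
        have : ContinuousWithinAt g (Ioi 0) 0 := by
          have := g_tendsto0
          rw [ContinuousWithinAt, g_zero]
          exact this
        exact (continuousWithinAt_Ioi_iff_Ici.1 this).mono Icc_subset_Ici_self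
      · exact g_contAt h ht.2
    obtain ⟨t₀, h₀, hm⟩ := isCompact_Icc.exists_isMaxOn (nonempty_Icc.2 (zero_le_one' ℝ)) hc
    refine ⟨t₀, h₀, fun t ht => hm ht, ?_⟩
    rcases h₀.1.eq_or_lt with h | h
    · rw [← h, g_zero]; norm_num
    rcases h₀.2.eq_or_lt with h' | h'
    · rw [h', g_one]; norm_num
    exact g_lt h h'
end
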